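/- Let φ₁, …, φ_K be unit vectors in ℂ^d and p₁, …, p_K nonnegative weights summing to 1, and consider the ensemble of pure states E_K = {(pᵢ, |φᵢ⟩⟨φᵢ|)}. Then the Holevo quantity χ(E_K) = S(Σᵢ pᵢ |φᵢ⟩⟨φᵢ|) is bounded above by the entropy of the K×K positive semidefinite matrix C_F with entries (C_F)ᵢⱼ = √(pᵢ pⱼ) |⟨φᵢ, φⱼ⟩|², that is, χ(E_K) ≤ S(C_F). -/

import Mathlib

open scoped InnerProductSpace Classical

open Matrix

/-- Von Neumann entropy of a (Hermitian) matrix via its eigenvalues, with natural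
logarithm and the convention `0 ln 0 = 0`. -/
noncomputable def vnEntropy {𝕜 : Type*} [RCLike 𝕜] {n : Type*} [Fintype n] [DecidableEq n]
    (σ : Matrix n n 𝕜) : ℝ :=
  if h : σ.IsHermitian then -∑ i, (h.eigenvalues i) * Real.log (h.eigenvalues i) else 0

/-!
Put `vᵢ = √pᵢ φᵢ` and let `B` be the matrix with columns `vᵢ`. Then `∑ᵢ pᵢ |φᵢ⟩⟨φᵢ| = B Bᴴ` has the
same nonzero spectrum, hence the same entropy, as the Gram matrix `Bᴴ B` of the `vᵢ`. The fidelity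
matrix `C_F` is the Hadamard product of this Gram matrix with the transposed Gram matrix `R` of the
`φᵢ`, and `R` is positive semidefinite with unit diagonal. Hadamard multiplication by such an `R` is
positive (Schur product theorem), unital and trace preserving. Written in eigenbases of the input
and of the output, a map of this kind acts on eigenvalues by a doubly stochastic matrix, so it does
not decrease the entropy, because `-x log x` is concave.
-/

open scoped ComplexOrder

section Entropy

variable {𝕜 m n ι : Type*} [RCLike 𝕜] [Fintype m] [DecidableEq m] [Fintype n] [DecidableEq n]
  [Fintype ι] [DecidableEq ι]

lemma vnEntropy_eq_sum_negMulLog_eigenvalues {σ : Matrix n n 𝕜} (hσ : σ.IsHermitian) :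
    vnEntropy σ = ∑ i, Real.negMulLog (hσ.eigenvalues i) := by
  simp [vnEntropy, dif_pos hσ, Real.negMulLog]

lemma vnEntropy_eq_sum_negMulLog_roots_charpoly {σ : Matrix n n 𝕜} (hσ : σ.IsHermitian) :
    vnEntropy σ = (σ.charpoly.roots.map fun z => Real.negMulLog (RCLike.re z)).sum := by
  rw [vnEntropy_eq_sum_negMulLog_eigenvalues hσ, hσ.roots_charpoly_eq_eigenvalues,
    Multiset.map_map]
  simp

lemma roots_X_pow_mul {R : Type*} [CommRing R] [IsDomain R] {f : Polynomial R} (hf : f ≠ 0)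
    (k : ℕ) : (Polynomial.X ^ k * f).roots = k • {0} + f.roots := by
  rw [Polynomial.roots_mul (mul_ne_zero (pow_ne_zero k Polynomial.X_ne_zero) hf),
    Polynomial.roots_X_pow]

lemma vnEntropy_mul_conjTranspose_comm (B : Matrix m n 𝕜) :
    vnEntropy (B * Bᴴ) = vnEntropy (Bᴴ * B) := by
  rw [vnEntropy_eq_sum_negMulLog_roots_charpoly (isHermitian_mul_conjTranspose_self B),
    vnEntropy_eq_sum_negMulLog_roots_charpoly (isHermitian_conjTranspose_mul_self B)]
  have roots_eq := congrArg Polynomial.roots (charpoly_mul_comm' B Bᴴ)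
  rw [roots_X_pow_mul (charpoly_monic _).ne_zero, roots_X_pow_mul (charpoly_monic _).ne_zero]
    at roots_eq
  simpa [Multiset.map_nsmul, Multiset.sum_nsmul] using
    congrArg (fun s => (s.map fun z => Real.negMulLog (RCLike.re z)).sum) roots_eq

lemma vnEntropy_sum_vecMulVec_star_eq_vnEntropy_gram (v : ι → EuclideanSpace 𝕜 n) :
    vnEntropy (∑ i, vecMulVec (v i) (star (v i))) = vnEntropy (gram 𝕜 v) := by
  let B : Matrix n ι 𝕜 := of fun x i => v i x
  have sum_eq : ∑ i, vecMulVec (v i) (star (v i)) = B * Bᴴ := by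
    ext x y
    simp [B, Matrix.sum_apply, mul_apply, vecMulVec_apply]
  have gram_eq : gram 𝕜 v = Bᴴ * B := by
    ext i j
    simp [B, mul_apply, PiLp.inner_apply, mul_comm]
  rw [sum_eq, gram_eq, vnEntropy_mul_conjTranspose_comm]

variable (𝕜) in
lemma vnEntropy_map_algebraMap {σ : Matrix n n ℝ} (hσ : σ.IsHermitian) :
    vnEntropy (σ.map (algebraMap ℝ 𝕜)) = vnEntropy σ := by
  have hσ_map : (σ.map (algebraMap ℝ 𝕜)).IsHermitian := hσ.map _ fun r => by simp
  rw [vnEntropy_eq_sum_negMulLog_roots_charpoly hσ_map,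
    vnEntropy_eq_sum_negMulLog_roots_charpoly hσ, charpoly_map, hσ.splits_charpoly.roots_map,
    Multiset.map_map]
  simp

end Entropy

lemma sum_le_sum_mulVec_of_concaveOn_of_mem_doublyStochastic {n : Type*} [Fintype n] [DecidableEq n]
    {M : Matrix n n ℝ} (hM : M ∈ doublyStochastic ℝ n) {s : Set ℝ} {f : ℝ → ℝ}
    (hf : ConcaveOn ℝ s f) {x : n → ℝ} (hx : ∀ i, x i ∈ s) :
    ∑ i, f (x i) ≤ ∑ i, f ((M *ᵥ x) i) :=
  calc ∑ j, f (x j) = ∑ j, (∑ i, M i j) * f (x j) := by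
        simp only [sum_col_of_mem_doublyStochastic hM, one_mul]
    _ = ∑ i, ∑ j, M i j * f (x j) := by
        simp only [Finset.sum_mul]
        exact Finset.sum_comm
    _ ≤ ∑ i, f ((M *ᵥ x) i) := Finset.sum_le_sum fun i _ =>
        hf.le_map_sum (fun _ _ => nonneg_of_mem_doublyStochastic hM)
          (sum_row_of_mem_doublyStochastic hM i) fun j _ => hx j

section DoublyStochasticMap

variable {𝕜 n : Type*} [RCLike 𝕜] [Fintype n] [DecidableEq n]

/-- Doubly stochastic maps of matrix algebras: linear maps that are positive, unital and trace
preserving. They are the noncommutative analogue of doubly stochastic matrices; complete positivity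
is not required. -/
structure IsDoublyStochasticMap (Φ : Matrix n n 𝕜 →ₗ[𝕜] Matrix n n 𝕜) : Prop where
  map_posSemidef : ∀ {A : Matrix n n 𝕜}, A.PosSemidef → (Φ A).PosSemidef
  map_one : Φ 1 = 1
  trace_map : ∀ A : Matrix n n 𝕜, (Φ A).trace = A.trace

/-- Conjugation `A ↦ U A U*` by a unitary matrix, as a linear map: a change of orthonormal basis. -/
def unitaryConj (U : unitaryGroup n 𝕜) : Matrix n n 𝕜 →ₗ[𝕜] Matrix n n 𝕜 :=
  (Unitary.conjStarAlgAut 𝕜 (Matrix n n 𝕜) U).toAlgEquiv.toLinearMap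

lemma isDoublyStochasticMap_unitaryConj (U : unitaryGroup n 𝕜) :
    IsDoublyStochasticMap (unitaryConj U) where
  map_posSemidef hA := hA.mul_mul_conjTranspose_same (U : Matrix n n 𝕜)
  map_one := map_one (Unitary.conjStarAlgAut 𝕜 (Matrix n n 𝕜) U)
  trace_map A := by
    simp [unitaryConj, Unitary.conjStarAlgAut_apply, trace_mul_cycle]

/-- The Schur multiplier `A ↦ A ⊙ R`, as a linear map. It turns the Gram matrix of an ensemble into
its fidelity matrix when `R` is the transposed Gram matrix of the states. -/
def hadamardRight (R : Matrix n n 𝕜) : Matrix n n 𝕜 →ₗ[𝕜] Matrix n n 𝕜 where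
  toFun A := A ⊙ R
  map_add' A B := add_hadamard R A B
  map_smul' c A := smul_hadamard A R c

lemma isDoublyStochasticMap_hadamardRight {R : Matrix n n 𝕜} (hR : R.PosSemidef)
    (hR_diag : R.diag = 1) : IsDoublyStochasticMap (hadamardRight R) where
  map_posSemidef hA := hA.hadamard hR
  map_one := one_hadamard_eq_one_iff.2 hR_diag
  trace_map A := by
    have R_apply_self (i : n) : R i i = 1 := congrFun hR_diag i
    simp [hadamardRight, trace, R_apply_self]

/-- The action of a linear map of matrices on diagonals: the `(i, j)` entry is the weight which the
image of the `j`-th diagonal matrix unit puts on the `i`-th diagonal position. The real part makes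
it a real matrix; for positive maps nothing is lost. In eigenbases of `A` and `Φ A` it carries the
eigenvalues of `A` to those of `Φ A`. -/
def diagonalTransition (Φ : Matrix n n 𝕜 →ₗ[𝕜] Matrix n n 𝕜) : Matrix n n ℝ :=
  of fun i j => RCLike.re (Φ (single j j 1) i i)

lemma diagonalTransition_mulVec (Φ : Matrix n n 𝕜 →ₗ[𝕜] Matrix n n 𝕜) (x : n → ℝ) (i : n) :
    (diagonalTransition Φ *ᵥ x) i = RCLike.re (Φ (diagonal (RCLike.ofReal ∘ x)) i i) := by
  have diagonal_eq : diagonal (RCLike.ofReal ∘ x) = ∑ j, (x j : 𝕜) • single j j (1 : 𝕜) := by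
    simp only [smul_single, smul_eq_mul, mul_one]
    exact (sum_single_eq_diagonal _).symm
  simp only [diagonalTransition, mulVec, dotProduct, of_apply, diagonal_eq, map_sum, map_smul,
    Matrix.sum_apply, Matrix.smul_apply, smul_eq_mul, RCLike.re_ofReal_mul, mul_comm]

namespace IsDoublyStochasticMap

variable {Φ Ψ : Matrix n n 𝕜 →ₗ[𝕜] Matrix n n 𝕜}

lemma comp (hΦ : IsDoublyStochasticMap Φ) (hΨ : IsDoublyStochasticMap Ψ) :
    IsDoublyStochasticMap (Φ ∘ₗ Ψ) where
  map_posSemidef hA := hΦ.map_posSemidef (hΨ.map_posSemidef hA)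
  map_one := by rw [LinearMap.comp_apply, hΨ.map_one, hΦ.map_one]
  trace_map A := by rw [LinearMap.comp_apply, hΦ.trace_map, hΨ.trace_map]

lemma diagonalTransition_mem_doublyStochastic (hΦ : IsDoublyStochasticMap Φ) :
    diagonalTransition Φ ∈ doublyStochastic ℝ n := by
  refine mem_doublyStochastic_iff_sum.2 ⟨fun i j => ?_, fun i => ?_, fun j => ?_⟩
  · have single_posSemidef : (single j j (1 : 𝕜)).PosSemidef := by
      rw [← diagonal_single]
      exact .diagonal (Pi.single_nonneg.2 zero_le_one)
    exact (RCLike.nonneg_iff.1 (hΦ.map_posSemidef single_posSemidef).diag_nonneg).1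
  · simpa [mulVec, dotProduct, hΦ.map_one, Function.comp_def] using
      diagonalTransition_mulVec Φ 1 i
  · simpa [diagonalTransition, trace] using congrArg RCLike.re (hΦ.trace_map (single j j 1))

theorem vnEntropy_le (hΦ : IsDoublyStochasticMap Φ) {A : Matrix n n 𝕜} (hA : A.PosSemidef) :
    vnEntropy A ≤ vnEntropy (Φ A) := by
  have hΦA : (Φ A).IsHermitian := (hΦ.map_posSemidef hA).isHermitian
  let U := hA.isHermitian.eigenvectorUnitary
  let V := hΦA.eigenvectorUnitary
  let Ψ : Matrix n n 𝕜 →ₗ[𝕜] Matrix n n 𝕜 := unitaryConj (star V) ∘ₗ Φ ∘ₗ unitaryConj U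
  have hΨ : IsDoublyStochasticMap Ψ := (isDoublyStochasticMap_unitaryConj _).comp
    (hΦ.comp (isDoublyStochasticMap_unitaryConj _))
  have Ψ_diagonal : Ψ (diagonal (RCLike.ofReal ∘ hA.isHermitian.eigenvalues)) =
      diagonal (RCLike.ofReal ∘ hΦA.eigenvalues) := by
    change Unitary.conjStarAlgAut 𝕜 _ (star V) (Φ (Unitary.conjStarAlgAut 𝕜 _ U _)) = _
    rw [← hA.isHermitian.spectral_theorem, hΦA.conjStarAlgAut_star_eigenvectorUnitary]
  have eigenvalues_eq : diagonalTransition Ψ *ᵥ hA.isHermitian.eigenvalues = hΦA.eigenvalues := by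
    ext i
    simp [diagonalTransition_mulVec, Ψ_diagonal]
  rw [vnEntropy_eq_sum_negMulLog_eigenvalues hA.isHermitian,
    vnEntropy_eq_sum_negMulLog_eigenvalues hΦA, ← eigenvalues_eq]
  exact sum_le_sum_mulVec_of_concaveOn_of_mem_doublyStochastic
    hΨ.diagonalTransition_mem_doublyStochastic Real.concaveOn_negMulLog hA.eigenvalues_nonneg

end IsDoublyStochasticMap

end DoublyStochasticMap

theorem vnEntropy_le_vnEntropy_hadamard {𝕜 n : Type*} [RCLike 𝕜] [Fintype n] [DecidableEq n]
    {A R : Matrix n n 𝕜} (hA : A.PosSemidef) (hR : R.PosSemidef) (hR_diag : R.diag = 1) :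
    vnEntropy A ≤ vnEntropy (A ⊙ R) :=
  (isDoublyStochasticMap_hadamardRight hR hR_diag).vnEntropy_le hA

section FidelityMatrix

variable {𝕜 ι n : Type*} [RCLike 𝕜]

lemma smul_vecMulVec_star_eq_vecMulVec_sqrt_smul (v : n → 𝕜) {r : ℝ} (hr : 0 ≤ r) :
    (r : 𝕜) • vecMulVec v (star v) = vecMulVec ((√r : 𝕜) • v) (star ((√r : 𝕜) • v)) := by
  rw [star_smul, smul_vecMulVec, vecMulVec_smul, smul_smul, RCLike.star_def, RCLike.conj_ofReal,
    ← RCLike.ofReal_mul, Real.mul_self_sqrt hr]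

lemma gram_sqrt_smul_hadamard_gram_transpose {E : Type*} [NormedAddCommGroup E]
    [InnerProductSpace 𝕜 E] (φ : ι → E) {p : ι → ℝ} (hp : ∀ i, 0 ≤ p i) :
    gram 𝕜 (fun i => (√(p i) : 𝕜) • φ i) ⊙ (gram 𝕜 φ)ᵀ =
      (of fun i j => √(p i * p j) * ‖⟪φ i, φ j⟫_𝕜‖ ^ 2).map (algebraMap ℝ 𝕜) := by
  ext i j
  have inner_mul_inner : ⟪φ i, φ j⟫_𝕜 * ⟪φ j, φ i⟫_𝕜 = (‖⟪φ i, φ j⟫_𝕜‖ : 𝕜) ^ 2 := by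
    rw [← inner_conj_symm (φ j), RCLike.mul_conj]
  simp only [hadamard_apply, gram_apply, inner_smul_right, inner_smul_left, RCLike.conj_ofReal,
    transpose_apply, map_apply, of_apply, Real.sqrt_mul (hp i), map_mul, map_pow,
    ← inner_mul_inner]
  ring

theorem pureState_holevo_le_entropy_fidelity_matrix_general [Fintype ι] [DecidableEq ι]
    [Fintype n] [DecidableEq n] (φ : ι → EuclideanSpace 𝕜 n) (hφ : ∀ i, ‖φ i‖ = 1)
    (p : ι → ℝ) (hp : ∀ i, 0 ≤ p i) :
    vnEntropy (∑ i, (p i : 𝕜) • vecMulVec (φ i) (star (φ i))) ≤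
      vnEntropy (of fun i j => √(p i * p j) * ‖⟪φ i, φ j⟫_𝕜‖ ^ 2) := by
  have fidelity_isHermitian :
      (of fun i j => √(p i * p j) * ‖⟪φ i, φ j⟫_𝕜‖ ^ 2).IsHermitian := by
    ext i j
    simp [mul_comm (p i), norm_inner_symm (φ i)]
  have gram_diag : (gram 𝕜 φ)ᵀ.diag = 1 := by
    ext i
    simp [inner_self_eq_norm_sq_to_K, hφ]
  let v i := (√(p i) : 𝕜) • φ i
  calc vnEntropy (∑ i, (p i : 𝕜) • vecMulVec (φ i) (star (φ i)))
      = vnEntropy (gram 𝕜 v) := by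
        simp only [smul_vecMulVec_star_eq_vecMulVec_sqrt_smul _ (hp _)]
        exact vnEntropy_sum_vecMulVec_star_eq_vnEntropy_gram v
    _ ≤ vnEntropy (gram 𝕜 v ⊙ (gram 𝕜 φ)ᵀ) :=
        vnEntropy_le_vnEntropy_hadamard (posSemidef_gram 𝕜 v) (posSemidef_gram 𝕜 φ).transpose
          gram_diag
    _ = vnEntropy (of fun i j => √(p i * p j) * ‖⟪φ i, φ j⟫_𝕜‖ ^ 2) := by
        rw [gram_sqrt_smul_hadamard_gram_transpose φ hp,
          vnEntropy_map_algebraMap 𝕜 fidelity_isHermitian]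

end FidelityMatrix

/-- For an ensemble of pure states the Holevo quantity `S(Σᵢ pᵢ |φᵢ⟩⟨φᵢ|)` is bounded
above by the entropy of the matrix `(C_F)ᵢⱼ = √(pᵢpⱼ)|⟨φᵢ,φⱼ⟩|²`. -/
theorem pureState_holevo_le_entropy_fidelity_matrix {d K : ℕ}
    (φ : Fin K → EuclideanSpace ℂ (Fin d)) (hφ : ∀ i, ‖φ i‖ = 1)
    (p : Fin K → ℝ) (hp : ∀ i, 0 ≤ p i) (hsum : ∑ i, p i = 1) :
    vnEntropy (∑ i, (p i : ℂ) • Matrix.vecMulVec (φ i) (star (φ i))) ≤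
      vnEntropy (Matrix.of fun i j : Fin K =>
        Real.sqrt (p i * p j) * ‖⟪φ i, φ j⟫_ℂ‖ ^ 2) :=
  pureState_holevo_le_entropy_fidelity_matrix_general φ hφ p hp
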